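/- For every mixed instance on a tree (a connected acyclic simple graph), an EFX^+_0 orientation always exists; consequently an EFX^+_- orientation always exists on trees (and hence on stars and paths). -/

import Mathlib

open Finset

variable {V : Type*} [DecidableEq V]

/-- `e` has strictly positive marginal value (is a *good*) for the valuation `v`
relative to the item set `M`. -/
def IsGoodFor (v : Finset (Sym2 V) → ℝ) (M : Finset (Sym2 V)) (e : Sym2 V) : Prop :=
  ∀ S ⊆ M.erase e, v S < v (insert e S)

/-- `e` has strictly negative marginal value (is a *chore*) for the valuation `v`
relative to the item set `M`. -/
def IsChoreFor (v : Finset (Sym2 V) → ℝ) (M : Finset (Sym2 V)) (e : Sym2 V) : Prop :=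
  ∀ S ⊆ M.erase e, v (insert e S) < v S

/-- `e` has zero marginal value (is a *dummy*) for the valuation `v`
relative to the item set `M`. -/
def IsDummyFor (v : Finset (Sym2 V) → ℝ) (M : Finset (Sym2 V)) (e : Sym2 V) : Prop :=
  ∀ S ⊆ M.erase e, v (insert e S) = v S

/-- A valid instance on a simple graph: the edge set `M` consists of non-loop edges,
every edge is (for every agent) a good, a chore, or a dummy, and every edge not
incident to an agent is a dummy for that agent. -/
def ValidInstance (M : Finset (Sym2 V)) (v : V → Finset (Sym2 V) → ℝ) : Prop :=
  (∀ e ∈ M, ¬ e.IsDiag) ∧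
  (∀ (i : V), ∀ e ∈ M, IsGoodFor (v i) M e ∨ IsChoreFor (v i) M e ∨ IsDummyFor (v i) M e) ∧
  (∀ (i : V), ∀ e ∈ M, i ∉ e → IsDummyFor (v i) M e)

/-- `X` is a (complete) allocation of the items in `M`: bundles are contained in `M`
and every item belongs to exactly one bundle. -/
def IsAllocation (M : Finset (Sym2 V)) (X : V → Finset (Sym2 V)) : Prop :=
  (∀ i, X i ⊆ M) ∧ ∀ e ∈ M, ∃! i, e ∈ X i

/-- Every allocated edge goes to one of its endpoint agents. -/
def IsOrientation (X : V → Finset (Sym2 V)) : Prop :=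
  ∀ i, ∀ e ∈ X i, i ∈ e

/-- Agent `i` envies agent `j`. -/
def Envies (v : V → Finset (Sym2 V) → ℝ) (X : V → Finset (Sym2 V)) (i j : V) : Prop :=
  v i (X i) < v i (X j)

/-- EFX condition on the envied bundle, removing an item whose removal *strictly*
decreases the value (superscript `+`). -/
def CondEnviedStrict (v : V → Finset (Sym2 V) → ℝ) (X : V → Finset (Sym2 V)) : Prop :=
  ∀ i j, Envies v X i j → ∀ e ∈ X j,
    v i ((X j).erase e) < v i (X j) → v i ((X j).erase e) ≤ v i (X i)

/-- EFX condition on the envied bundle, removing an item whose removal weakly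
decreases the value (superscript `0`). -/
def CondEnviedWeak (v : V → Finset (Sym2 V) → ℝ) (X : V → Finset (Sym2 V)) : Prop :=
  ∀ i j, Envies v X i j → ∀ e ∈ X j,
    v i ((X j).erase e) ≤ v i (X j) → v i ((X j).erase e) ≤ v i (X i)

/-- EFX condition on the envious agent's own bundle, removing an item whose removal
*strictly* increases the value (subscript `-`). -/
def CondOwnStrict (v : V → Finset (Sym2 V) → ℝ) (X : V → Finset (Sym2 V)) : Prop :=
  ∀ i j, Envies v X i j → ∀ e ∈ X i,
    v i (X i) < v i ((X i).erase e) → v i (X j) ≤ v i ((X i).erase e)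

/-- EFX condition on the envious agent's own bundle, removing an item whose removal
weakly increases the value (subscript `0`). -/
def CondOwnWeak (v : V → Finset (Sym2 V) → ℝ) (X : V → Finset (Sym2 V)) : Prop :=
  ∀ i j, Envies v X i j → ∀ e ∈ X i,
    v i (X i) ≤ v i ((X i).erase e) → v i (X j) ≤ v i ((X i).erase e)

theorem aux_empty_le (v : Finset (Sym2 V) → ℝ) (M : Finset (Sym2 V)) (S : Finset (Sym2 V))
    (hS : S ⊆ M) (h : ∀ e ∈ S, IsGoodFor v M e) : v ∅ ≤ v S := by
  induction S using Finset.induction_on with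
  | empty => exact le_rfl
  | insert a S ha ih =>
    have h1 := ih (fun x hx => hS (mem_insert_of_mem hx)) (fun x hx => h x (mem_insert_of_mem hx))
    have h2 := h a (mem_insert_self _ _) S (fun x hx => mem_erase.2
      ⟨fun hxa => ha (hxa ▸ hx), hS (mem_insert_of_mem hx)⟩)
    exact h1.trans h2.le

theorem aux_le_empty (v : Finset (Sym2 V) → ℝ) (M : Finset (Sym2 V)) (S : Finset (Sym2 V))
    (hv : ∀ e ∈ M, IsGoodFor v M e ∨ IsChoreFor v M e ∨ IsDummyFor v M e)
    (hS : S ⊆ M) (h : ∀ e ∈ S, ¬ IsGoodFor v M e) : v S ≤ v ∅ := by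
  induction S using Finset.induction_on with
  | empty => exact le_rfl
  | insert a S ha ih =>
    have h1 := ih (fun x hx => hS (mem_insert_of_mem hx)) (fun x hx => h x (mem_insert_of_mem hx))
    have hsub : S ⊆ M.erase a := fun x hx => mem_erase.2
      ⟨fun hxa => ha (hxa ▸ hx), hS (mem_insert_of_mem hx)⟩
    have hn := h a (mem_insert_self _ _)
    rcases hv a (hS (mem_insert_self _ _)) with h2 | h2 | h2
    · exact absurd h2 hn
    · exact (h2 S hsub).le.trans h1
    · exact (h2 S hsub).le.trans h1

theorem aux_not_good_of_dummy (v : Finset (Sym2 V) → ℝ) (M : Finset (Sym2 V)) (e : Sym2 V)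
    (h : IsDummyFor v M e) : ¬ IsGoodFor v M e := fun hg => by
  have h1 := h ∅ (empty_subset _)
  have h2 := hg ∅ (empty_subset _)
  exact absurd h1 h2.ne'

theorem aux_erase_good (v : Finset (Sym2 V) → ℝ) (M S : Finset (Sym2 V)) (e : Sym2 V)
    (hS : S ⊆ M) (he : e ∈ S) (hg : IsGoodFor v M e) : v (S.erase e) < v S := by
  have h := hg (S.erase e) (erase_subset_erase _ hS)
  rwa [insert_erase he] at h

theorem aux_good_of_erase (v : Finset (Sym2 V) → ℝ) (M S : Finset (Sym2 V)) (e : Sym2 V)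
    (hv : ∀ e ∈ M, IsGoodFor v M e ∨ IsChoreFor v M e ∨ IsDummyFor v M e)
    (hS : S ⊆ M) (he : e ∈ S) (hlt : v (S.erase e) < v S) : IsGoodFor v M e := by
  rcases hv e (hS he) with h | h | h
  · exact h
  · have h := h (S.erase e) (erase_subset_erase _ hS)
    rw [insert_erase he] at h
    exact absurd h hlt.not_gt
  · have h := h (S.erase e) (erase_subset_erase _ hS)
    rw [insert_erase he] at h
    exact absurd h hlt.ne'

theorem aux_parent_unique (G : SimpleGraph V) (hG : G.IsTree) (r i j k : V)
    (hj : G.Adj i j) (hk : G.Adj i k) (hdj : G.dist r j < G.dist r i)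
    (hdk : G.dist r k < G.dist r i) : j = k := by
  have ej := hG.dist_eq_dist_add_one_of_adj r hj
  have ek := hG.dist_eq_dist_add_one_of_adj r hk
  obtain ⟨p, hp⟩ := hG.connected.exists_walk_length_eq_dist r j
  obtain ⟨q, hq⟩ := hG.connected.exists_walk_length_eq_dist r k
  have hp' : (p.concat hj.symm).IsPath :=
    SimpleGraph.Walk.isPath_of_length_eq_dist _ (by rw [SimpleGraph.Walk.length_concat]; omega)
  have hq' : (q.concat hk.symm).IsPath :=
    SimpleGraph.Walk.isPath_of_length_eq_dist _ (by rw [SimpleGraph.Walk.length_concat]; omega)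
  have h := (hG.existsUnique_path r i).unique hp' hq'
  have h2 := congrArg SimpleGraph.Walk.penultimate h
  simpa using h2

theorem aux_main [Fintype V]
    (G : SimpleGraph V) [DecidableRel G.Adj]
    (htree : G.IsTree)
    (v : V → Finset (Sym2 V) → ℝ)
    (hvalid : ValidInstance G.edgeFinset v) :
    ∃ X : V → Finset (Sym2 V),
        IsAllocation G.edgeFinset X ∧ IsOrientation X ∧
          CondEnviedStrict v X ∧ CondOwnWeak v X := by
  classical
  obtain ⟨-, hv, hdum⟩ := hvalid
  obtain ⟨r⟩ := htree.connected.nonempty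
  set M := G.edgeFinset with hM
  set d : V → ℕ := fun x => G.dist r x with hd
  have hadj : ∀ i j, s(i, j) ∈ M → G.Adj i j := fun i j h => by simpa [hM] using h
  have hne : ∀ i j, s(i, j) ∈ M → d i < d j ∨ d j < d i := fun i j h =>
    lt_or_gt_of_ne (htree.dist_ne_of_adj r (hadj i j h))
  have huniq : ∀ i j k, s(i, j) ∈ M → s(i, k) ∈ M → d j < d i → d k < d i → j = k :=
    fun i j k h1 h2 => aux_parent_unique G htree r i j k (hadj _ _ h1) (hadj _ _ h2)
  -- an edge goes to its upper endpoint when it is a good for it, otherwise to the lower one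
  let O : V → V → Prop := fun i j =>
    (d i < d j ∧ IsGoodFor (v i) M s(i, j)) ∨ (d j < d i ∧ ¬ IsGoodFor (v j) M s(i, j))
  let X : V → Finset (Sym2 V) := fun i => M.filter (fun e => ∃ j, e = s(i, j) ∧ O i j)
  have hXM : ∀ i, X i ⊆ M := fun i => filter_subset _ _
  have hX : ∀ i e, e ∈ X i → ∃ j, e = s(i, j) ∧ O i j := fun i e h => (mem_filter.1 h).2
  have hgi : ∀ i, ∀ e ∈ M, IsGoodFor (v i) M e → i ∈ e := fun i e he hg => by
    by_contra hni
    exact aux_not_good_of_dummy _ _ _ (hdum i e he hni) hg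
  -- a good of `i` in the bundle of `j`
  have hother : ∀ i j f, i ≠ j → f ∈ X j → IsGoodFor (v i) M f →
      f = s(i, j) ∧ d j < d i ∧ IsGoodFor (v j) M f := by
    intro i j f hij hf hg
    have hfM := hXM j hf
    obtain ⟨k, rfl, hO⟩ := hX j f hf
    have hik := hgi i _ hfM hg
    rcases Sym2.mem_iff.1 hik with rfl | rfl
    · exact absurd rfl hij
    · rcases hO with ⟨h1, h2⟩ | ⟨h1, h2⟩
      · exact ⟨Sym2.eq_swap, h1, h2⟩
      · exact absurd hg h2
  -- a non-good of `i` in its own bundle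
  have hown : ∀ i e, e ∈ X i → ¬ IsGoodFor (v i) M e →
      ∃ k, e = s(i, k) ∧ d k < d i ∧ ¬ IsGoodFor (v k) M e := by
    intro i e he hg
    obtain ⟨k, rfl, hO⟩ := hX i e he
    rcases hO with ⟨h1, h2⟩ | ⟨h1, h2⟩
    · exact absurd h2 hg
    · exact ⟨k, rfl, h1, h2⟩
  refine ⟨X, ⟨hXM, ?_⟩, ?_, ?_, ?_⟩
  · intro e
    induction e using Sym2.ind with
    | _ a b =>
    intro he
    have key : ∀ a b, s(a, b) ∈ M → d a < d b → ∃! i, s(a, b) ∈ X i := by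
      intro a b he hab
      have hab' : a ≠ b := fun h => by simp [h] at hab
      by_cases hg : IsGoodFor (v a) M s(a, b)
      · refine ⟨a, mem_filter.2 ⟨he, b, rfl, Or.inl ⟨hab, hg⟩⟩, ?_⟩
        intro i hi
        obtain ⟨k, hk, hO⟩ := hX i _ hi
        rcases Sym2.eq_iff.1 hk with ⟨rfl, rfl⟩ | ⟨rfl, rfl⟩
        · rfl
        · rcases hO with ⟨h1, h2⟩ | ⟨h1, h2⟩
          · exact absurd h1 hab.not_gt
          · rw [Sym2.eq_swap] at h2
            exact absurd hg h2
      · refine ⟨b, mem_filter.2 ⟨he, a, Sym2.eq_swap, Or.inr ⟨hab, ?_⟩⟩, ?_⟩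
        · rwa [Sym2.eq_swap]
        intro i hi
        obtain ⟨k, hk, hO⟩ := hX i _ hi
        rcases Sym2.eq_iff.1 hk with ⟨rfl, rfl⟩ | ⟨rfl, rfl⟩
        · rcases hO with ⟨h1, h2⟩ | ⟨h1, h2⟩
          · exact absurd h2 hg
          · exact absurd h1 hab.not_gt
        · rfl
    rcases hne a b he with h | h
    · exact key a b he h
    · have h3 := key b a (by rwa [Sym2.eq_swap]) h
      rwa [Sym2.eq_swap] at h3
  · intro i e he
    obtain ⟨k, rfl, -⟩ := hX i e he
    exact Sym2.mem_mk_left _ _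
  · intro i j henv e he hlt
    have hij : i ≠ j := by
      rintro rfl
      exact lt_irrefl _ henv
    have hg := aux_good_of_erase (v i) M (X j) e (hv i) (hXM j) he hlt
    obtain ⟨rfl, hdji, hgj⟩ := hother i j e hij he hg
    have h1 : v i ((X j).erase s(i, j)) ≤ v i ∅ := by
      refine aux_le_empty _ M _ (hv i) ((erase_subset _ _).trans (hXM j)) ?_
      intro f hf hgf
      obtain ⟨hf1, hf2⟩ := mem_erase.1 hf
      exact hf1 (hother i j f hij hf2 hgf).1
    have h2 : v i ∅ ≤ v i (X i) := by
      refine aux_empty_le _ M _ (hXM i) ?_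
      intro f hf
      by_contra hngf
      obtain ⟨k, rfl, hdk, hnk⟩ := hown i f hf hngf
      have hjk := huniq i j k (hXM j he) (hXM i hf) hdji hdk
      subst hjk
      exact hnk hgj
    exact h1.trans h2
  · intro i j henv e he hle
    have hij : i ≠ j := by
      rintro rfl
      exact lt_irrefl _ henv
    have hng : ¬ IsGoodFor (v i) M e := fun hg =>
      absurd (aux_erase_good _ M _ e (hXM i) he hg) hle.not_gt
    obtain ⟨k, rfl, hdk, hnk⟩ := hown i e he hng
    have h1 : v i (X j) ≤ v i ∅ := by
      refine aux_le_empty _ M _ (hv i) (hXM j) ?_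
      intro f hf hgf
      obtain ⟨rfl, hdj, hgj⟩ := hother i j f hij hf hgf
      have hjk := huniq i j k (hXM j hf) (hXM i he) hdj hdk
      subst hjk
      exact hnk hgj
    have h2 : v i ∅ ≤ v i ((X i).erase s(i, k)) := by
      refine aux_empty_le _ M _ ((erase_subset _ _).trans (hXM i)) ?_
      intro f hf
      obtain ⟨hf1, hf2⟩ := mem_erase.1 hf
      by_contra hngf
      obtain ⟨l, rfl, hdl, -⟩ := hown i f hf2 hngf
      have hkl := huniq i k l (hXM i he) (hXM i hf2) hdk hdl
      subst hkl
      exact hf1 rfl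
    exact h1.trans h2

/-- For every mixed instance on a tree, an EFX⁺₀ orientation exists;
consequently an EFX⁺₋ orientation also exists. -/
theorem stmt6 {V : Type*} [Fintype V] [DecidableEq V]
    (G : SimpleGraph V) [DecidableRel G.Adj]
    (htree : G.IsTree)
    (v : V → Finset (Sym2 V) → ℝ)
    (hvalid : ValidInstance G.edgeFinset v) :
    (∃ X : V → Finset (Sym2 V),
        IsAllocation G.edgeFinset X ∧ IsOrientation X ∧
          CondEnviedStrict v X ∧ CondOwnWeak v X) ∧
    (∃ X : V → Finset (Sym2 V),
        IsAllocation G.edgeFinset X ∧ IsOrientation X ∧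
          CondEnviedStrict v X ∧ CondOwnStrict v X) := by
  obtain ⟨X, h1, h2, h3, h4⟩ := aux_main G htree v hvalid
  exact ⟨⟨X, h1, h2, h3, h4⟩, X, h1, h2, h3, fun i j henv e he hlt => h4 i j henv e he hlt.le⟩
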